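/- Let V ∈ L²(ℝ³;ℝ) be the (unique) function such that ∫_{ℝ³} V(x)(∫_{ℝ³} e^{−ik·x}φ(k) dk) dx = ∫_{ℝ³} v(k)φ(k) dk for every Schwartz function φ (i.e. the unnormalized Fourier transform ∫ V(x)e^{−ik·x}dx of V equals v in the distributional/L² sense). Then V ∈ L⁴(ℝ³), i.e. ∫_{ℝ³} |V(x)|⁴ dx < ∞. -/

import Mathlib

open MeasureTheory
open scoped ENNReal

noncomputable section

/-- The dispersion relation `ω(k) = √(1+|k|²)` of the massive scalar field. -/
def ω (k : EuclideanSpace ℝ (Fin 3)) : ℝ := Real.sqrt (1 + ‖k‖ ^ 2)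

/-- `v(k) = −4/(ω(k)(|k|²+ω(k))) + 2/(|k|²+ω(k))²`, which is `(2π)^{3/2}` times the
Fourier transform of the effective pair potential `V` of the dressed Nelson model. -/
def vker (k : EuclideanSpace ℝ (Fin 3)) : ℝ :=
  -4 / (ω k * (‖k‖ ^ 2 + ω k)) + 2 / (‖k‖ ^ 2 + ω k) ^ 2

open scoped FourierTransform SchwartzMap

local notation "E3" => EuclideanSpace ℝ (Fin 3)


theorem memLp_comp_smul {F : Type*} [NormedAddCommGroup F] {p : ℝ≥0∞} (f : E3 → F) (hf : MemLp f p volume)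
    (r : ℝ) (hr : r ≠ 0) : MemLp (fun x => f (r • x)) p volume := by
  have hm : AEMeasurable (fun x : E3 => r • x) volume := by fun_prop
  have key : MemLp f p (Measure.map (fun x : E3 => r • x) volume) := by
    rw [Measure.map_addHaar_smul _ hr]
    exact hf.smul_measure ENNReal.ofReal_ne_top
  exact (memLp_map_measure_iff key.1 hm).1 key

theorem fourierInv_smul_flip (φ : 𝓢(E3, ℂ)) (f : E3 → ℂ) (hf : Integrable f) :
    ∫ x, (𝓕⁻ φ) x • f x = ∫ x, φ x • (𝓕⁻ f) x := by
  have := VectorFourier.integral_fourierIntegral_smul_eq_flip (𝕜 := ℝ) (L := -innerₗ E3) (μ := volume) (ν := volume)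
    Real.continuous_fourierChar (by simp; fun_prop) φ.integrable hf
  have hflip : (-innerₗ E3).flip = -innerₗ E3 := by
    ext x y; simp [real_inner_comm]
  rw [hflip] at this
  rw [SchwartzMap.fourierInv_coe]
  exact this

theorem eq_fourierInv (u w : Lp ℂ 2 (volume : Measure E3))
    (h : ∀ φ : 𝓢(E3, ℂ), ∫ x, (𝓕 φ) x • u x = ∫ x, φ x • w x) : u = 𝓕⁻ w := by
  have h1 : 𝓕 u = w := by
    have inj := LinearMap.ker_eq_bot.1 (Lp.ker_toTemperedDistributionCLM_eq_bot (F := ℂ) (E := E3) (μ := volume) (p := 2))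
    apply inj
    change Lp.toTemperedDistribution (𝓕 u) = Lp.toTemperedDistribution w
    rw [← Lp.fourier_toTemperedDistribution_eq]
    ext φ
    rw [TemperedDistribution.fourier_apply, Lp.toTemperedDistribution_apply, Lp.toTemperedDistribution_apply]
    exact h φ
  rw [← h1, FourierTransform.fourierInv_fourier_eq]

theorem norm_fourierInv_le (f : Lp ℂ 2 (volume : Measure E3)) (hf : Integrable f) :
    ∀ᵐ x, ‖(𝓕⁻ f : Lp ℂ 2 (volume : Measure E3)) x‖ ≤ ∫ x, ‖f x‖ := by
  have hb : ∀ x, ‖𝓕⁻ (f : E3 → ℂ) x‖ ≤ ∫ x, ‖f x‖ := fun x =>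
    VectorFourier.norm_fourierIntegral_le_integral_norm Real.fourierChar volume (-innerₗ E3) f x
  have hc : Continuous (𝓕⁻ (f : E3 → ℂ)) :=
    VectorFourier.fourierIntegral_continuous Real.continuous_fourierChar (by simp only [LinearMap.neg_apply, innerₗ_apply_apply]; fun_prop) hf
  have key : ∀ᵐ x, (𝓕⁻ f : Lp ℂ 2 (volume : Measure E3)) x = 𝓕⁻ (f : E3 → ℂ) x := by
    apply ae_eq_of_integral_contDiff_smul_eq
    · exact (Lp.memLp _).locallyIntegrable (by norm_num)
    · exact hc.locallyIntegrable
    · intro g g_smooth g_cpt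
      have hg₁ : HasCompactSupport (Complex.ofRealCLM ∘ g) := g_cpt.comp_left rfl
      have hg₂ : ContDiff ℝ (⊤ : ℕ∞) (Complex.ofRealCLM ∘ g) := by fun_prop
      set φ := hg₁.toSchwartzMap hg₂
      have e := fourierInv_smul_flip φ f hf
      have e2 : Lp.toTemperedDistribution (𝓕⁻ f) φ = Lp.toTemperedDistribution f (𝓕⁻ φ) := by
        rw [← Lp.fourierInv_toTemperedDistribution_eq, TemperedDistribution.fourierInv_apply]
      rw [Lp.toTemperedDistribution_apply, Lp.toTemperedDistribution_apply, e] at e2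
      simpa [φ] using e2
  filter_upwards [key] with x hx
  rw [hx]; exact hb x

theorem lintegral_enorm_sq (f : Lp ℂ 2 (volume : Measure E3)) : ∫⁻ x, ‖f x‖ₑ ^ 2 = ENNReal.ofReal (‖f‖ ^ 2) := by
  have h := eLpNorm_nnreal_pow_eq_lintegral (μ := volume) (f := (f : E3 → ℂ)) (p := 2) (by norm_num)
  rw [ENNReal.ofReal_pow (norm_nonneg _), ofReal_norm, Lp.enorm_def]
  simpa using h.symm

theorem pointwise_bound (A y : ℝ) (z : ℕ → ℝ) (hA : 0 < A) (hy : 0 ≤ y) (hz : ∀ n, 0 ≤ z n)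
    (h : ∀ n, y ≤ A * 2 ^ n + z n) :
    ENNReal.ofReal y ^ 4 ≤ ENNReal.ofReal (4 * A ^ 2) * ENNReal.ofReal y ^ 2 +
      ∑' n, ENNReal.ofReal (16 * A ^ 2 * 4 ^ (n + 1)) * ENNReal.ofReal (z n) ^ 2 := by
  by_cases h0 : y ≤ 2 * A
  · refine le_trans ?_ le_self_add
    rw [← ENNReal.ofReal_pow hy, ← ENNReal.ofReal_pow hy, ← ENNReal.ofReal_mul (by positivity)]
    apply ENNReal.ofReal_le_ofReal
    have : y ^ 2 ≤ (2 * A) ^ 2 := by gcongr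
    nlinarith [sq_nonneg y]
  · push Not at h0
    obtain ⟨n, h1, h2⟩ := exists_nat_pow_near (x := y / (2 * A)) (y := 2)
      ((one_le_div (by positivity)).2 h0.le) (by norm_num)
    rw [le_div_iff₀ (by positivity)] at h1
    rw [div_lt_iff₀ (by positivity)] at h2
    refine le_trans ?_ le_add_self
    refine le_trans ?_ (ENNReal.le_tsum n)
    rw [← ENNReal.ofReal_pow hy, ← ENNReal.ofReal_pow (hz n), ← ENNReal.ofReal_mul (by positivity)]
    apply ENNReal.ofReal_le_ofReal
    have h3 : y ≤ 2 * z n := by nlinarith [h n]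
    have h4 : y ^ 2 ≤ (2 * z n) ^ 2 := by gcongr
    have h5 : y ^ 2 ≤ (2 ^ (n + 1) * (2 * A)) ^ 2 := by gcongr
    calc y ^ 4 = y ^ 2 * y ^ 2 := by ring
      _ ≤ (2 ^ (n + 1) * (2 * A)) ^ 2 * (2 * z n) ^ 2 := by gcongr
      _ = 16 * A ^ 2 * (2 ^ 2) ^ (n + 1) * (z n) ^ 2 := by rw [← pow_mul]; ring
      _ = _ := by norm_num

theorem L4_of_decomp (w : Lp ℂ 2 (volume : Measure E3)) (A B : ℝ) (hA : 0 < A) (hB : 0 ≤ B)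
    (a b : ℕ → Lp ℂ 2 (volume : Measure E3)) (hab : ∀ n, w = a n + b n) (ha : ∀ n, Integrable (a n))
    (ha' : ∀ n, ∫ x, ‖a n x‖ ≤ A * 2 ^ n)
    (hb : ∀ n, ∫⁻ x, ‖b n x‖ₑ ^ 2 ≤ ENNReal.ofReal (B * (1 / 16) ^ n)) :
    ∫⁻ x, ‖(𝓕⁻ w : Lp ℂ 2 (volume : Measure E3)) x‖ₑ ^ 4 < ⊤ := by
  have hP : ∀ n, ∫⁻ x, ‖(𝓕⁻ (b n) : Lp ℂ 2 (volume : Measure E3)) x‖ₑ ^ 2 = ∫⁻ x, ‖b n x‖ₑ ^ 2 := by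
    intro n
    rw [lintegral_enorm_sq, lintegral_enorm_sq, ← Lp.norm_fourier_eq (𝓕⁻ (b n)),
      FourierTransform.fourier_fourierInv_eq]
  have hall : ∀ᵐ x, ∀ n, ‖(𝓕⁻ w : Lp ℂ 2 (volume : Measure E3)) x‖ ≤
      A * 2 ^ n + ‖(𝓕⁻ (b n) : Lp ℂ 2 (volume : Measure E3)) x‖ := by
    rw [ae_all_iff]
    intro n
    have e : (𝓕⁻ w : Lp ℂ 2 (volume : Measure E3)) = 𝓕⁻ (a n) + 𝓕⁻ (b n) := by
      rw [hab n, FourierTransform.fourierInv_add]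
    rw [e]
    filter_upwards [Lp.coeFn_add (𝓕⁻ (a n) : Lp ℂ 2 (volume : Measure E3)) (𝓕⁻ (b n)),
      norm_fourierInv_le (a n) (ha n)] with x h1 h2
    rw [h1, Pi.add_apply]
    refine (norm_add_le _ _).trans ?_
    gcongr
    exact h2.trans (ha' n)
  have hbd : ∀ᵐ x, ‖(𝓕⁻ w : Lp ℂ 2 (volume : Measure E3)) x‖ₑ ^ 4 ≤
      ENNReal.ofReal (4 * A ^ 2) * ‖(𝓕⁻ w : Lp ℂ 2 (volume : Measure E3)) x‖ₑ ^ 2 +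
      ∑' n, ENNReal.ofReal (16 * A ^ 2 * 4 ^ (n + 1)) *
        ‖(𝓕⁻ (b n) : Lp ℂ 2 (volume : Measure E3)) x‖ₑ ^ 2 := by
    filter_upwards [hall] with x hx
    have := pointwise_bound A _ _ hA (norm_nonneg _) (fun n => norm_nonneg _) hx
    simpa only [ofReal_norm] using this
  have hm : ∀ f : Lp ℂ 2 (volume : Measure E3), AEMeasurable (fun x => ‖f x‖ₑ ^ 2) :=
    fun f => (Lp.aestronglyMeasurable f).enorm.pow_const 2
  refine (lintegral_mono_ae hbd).trans_lt ?_
  rw [lintegral_add_left' ((hm _).const_mul _), lintegral_const_mul'' _ (hm _),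
    lintegral_tsum (fun n => (hm _).const_mul _), lintegral_enorm_sq]
  refine ENNReal.add_lt_top.2 ⟨ENNReal.mul_lt_top ENNReal.ofReal_lt_top ENNReal.ofReal_lt_top, ?_⟩
  have hs : Summable (fun n : ℕ => 64 * A ^ 2 * B * (1 / 4 : ℝ) ^ n) :=
    (summable_geometric_of_lt_one (by norm_num) (by norm_num)).mul_left _
  refine lt_of_le_of_lt (ENNReal.tsum_le_tsum fun n => ?_) (lt_top_iff_ne_top.2 hs.tsum_ofReal_ne_top)
  rw [lintegral_const_mul'' _ (hm _), hP n]
  refine (mul_le_mul_right (hb n) _).trans ?_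
  rw [← ENNReal.ofReal_mul (by positivity)]
  apply ENNReal.ofReal_le_ofReal
  apply le_of_eq
  have : (1 / 4 : ℝ) ^ n = 4 ^ n * (1 / 16) ^ n := by rw [← mul_pow]; norm_num
  rw [this]; ring


theorem vker_bound (k : E3) : |vker k| ≤ 6 * (1 + ‖k‖ ^ 2) ^ (-3 / 2 : ℝ) := by
  have hs : (1 : ℝ) ≤ 1 + ‖k‖ ^ 2 := by nlinarith [sq_nonneg ‖k‖]
  have hw1 : 1 ≤ ω k := Real.one_le_sqrt.2 hs
  have hw2 : ω k ^ 2 = 1 + ‖k‖ ^ 2 := Real.sq_sqrt (by linarith)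
  have hr : (1 + ‖k‖ ^ 2) ^ (-3 / 2 : ℝ) = 1 / ω k ^ 3 := by
    have : ω k ^ 3 = (1 + ‖k‖ ^ 2) ^ (3 / 2 : ℝ) := by
      rw [ω, Real.sqrt_eq_rpow, ← Real.rpow_natCast, ← Real.rpow_mul (by linarith)]
      norm_num
    rw [this, neg_div, Real.rpow_neg (by linarith), one_div]
  rw [hr]
  have hd : ω k ^ 2 ≤ ‖k‖ ^ 2 + ω k := by linarith
  have h1 : 4 / (ω k * (‖k‖ ^ 2 + ω k)) ≤ 4 / ω k ^ 3 := by
    apply div_le_div_of_nonneg_left (by norm_num) (by positivity)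
    nlinarith
  have h2 : 2 / (‖k‖ ^ 2 + ω k) ^ 2 ≤ 2 / ω k ^ 3 := by
    apply div_le_div_of_nonneg_left (by norm_num) (by positivity)
    calc ω k ^ 3 ≤ ω k ^ 4 := pow_le_pow_right₀ hw1 (by norm_num)
      _ = (ω k ^ 2) ^ 2 := by ring
      _ ≤ _ := by gcongr
  have p1 : 0 ≤ 4 / (ω k * (‖k‖ ^ 2 + ω k)) := by positivity
  have p2 : 0 ≤ 2 / (‖k‖ ^ 2 + ω k) ^ 2 := by positivity
  have e : 6 * (1 / ω k ^ 3) = 4 / ω k ^ 3 + 2 / ω k ^ 3 := by ring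
  rw [vker, neg_div, e, abs_le]
  constructor <;> linarith

theorem vker_meas : Measurable vker := by
  unfold vker ω
  fun_prop

theorem int_rpow (r : ℝ) (hr : r < -3 / 2) : Integrable (fun k : E3 => (1 + ‖k‖ ^ 2) ^ r) := by
  have := integrable_rpow_neg_one_add_norm_sq (E := E3) (μ := volume) (r := -2 * r) (by simp; linarith)
  convert this using 3
  ring

def vC (k : E3) : ℂ := (vker k : ℂ)

theorem norm_vC (k : E3) : ‖vC k‖ = |vker k| := by simp [vC]

theorem vC_meas : Measurable vC := Complex.measurable_ofReal.comp vker_meas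

theorem vC_sq_bound (k : E3) : ‖vC k‖ ^ 2 ≤ 36 * (1 + ‖k‖ ^ 2) ^ (-3 : ℝ) := by
  have h := vker_bound k
  rw [norm_vC]
  calc |vker k| ^ 2 ≤ (6 * (1 + ‖k‖ ^ 2) ^ (-3 / 2 : ℝ)) ^ 2 := by gcongr
    _ = _ := by
      rw [mul_pow, ← Real.rpow_natCast ((1 + ‖k‖ ^ 2) ^ (-3 / 2 : ℝ)), ← Real.rpow_mul (by positivity)]
      norm_num

theorem vC_memLp : MemLp vC 2 volume := by
  rw [memLp_two_iff_integrable_sq_norm vC_meas.aestronglyMeasurable]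
  refine ((int_rpow (-3) (by norm_num)).const_mul 36).mono' ?_ ?_
  · exact (vC_meas.norm.pow_const 2).aestronglyMeasurable
  · filter_upwards with k
    rw [Real.norm_of_nonneg (by positivity)]
    exact vC_sq_bound k

def Sset (n : ℕ) : Set E3 := {k | 1 + ‖k‖ ^ 2 ≤ 16 ^ n}

theorem Sset_meas (n : ℕ) : MeasurableSet (Sset n) := by
  unfold Sset
  exact measurableSet_le (by fun_prop) (by fun_prop)

theorem low_bound (n : ℕ) (k : E3) :
    ‖(Sset n).indicator vC k‖ ≤ 2 ^ n * (6 * (1 + ‖k‖ ^ 2) ^ (-7 / 4 : ℝ)) := by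
  by_cases h : k ∈ Sset n
  · rw [Set.indicator_of_mem h, norm_vC]
    refine (vker_bound k).trans ?_
    have hs : (0 : ℝ) < 1 + ‖k‖ ^ 2 := by positivity
    have h1 : (1 + ‖k‖ ^ 2) ^ (1 / 4 : ℝ) ≤ 2 ^ n := by
      calc (1 + ‖k‖ ^ 2) ^ (1 / 4 : ℝ) ≤ ((16 : ℝ) ^ n) ^ (1 / 4 : ℝ) :=
            Real.rpow_le_rpow hs.le h (by norm_num)
        _ = 2 ^ n := by
          have : (16 : ℝ) ^ n = (2 ^ n) ^ (4 : ℝ) := by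
            rw [show (16 : ℝ) = 2 ^ 4 by norm_num, ← pow_mul, mul_comm, pow_mul]
            norm_cast
          rw [this, ← Real.rpow_mul (by positivity)]
          norm_num
    have h2 : (1 + ‖k‖ ^ 2) ^ (-3 / 2 : ℝ) =
        (1 + ‖k‖ ^ 2) ^ (1 / 4 : ℝ) * (1 + ‖k‖ ^ 2) ^ (-7 / 4 : ℝ) := by
      rw [← Real.rpow_add hs]; norm_num
    rw [h2]
    have h3 : 0 ≤ (1 + ‖k‖ ^ 2) ^ (-7 / 4 : ℝ) := by positivity
    nlinarith [mul_le_mul_of_nonneg_right h1 h3]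
  · rw [Set.indicator_of_notMem h, norm_zero]
    positivity

theorem high_bound (n : ℕ) (k : E3) :
    ‖(Sset n)ᶜ.indicator vC k‖ ^ 2 ≤ (1 / 16) ^ n * (36 * (1 + ‖k‖ ^ 2) ^ (-2 : ℝ)) := by
  by_cases h : k ∈ Sset n
  · rw [Set.indicator_of_notMem (by simpa using h)]
    rw [norm_zero, zero_pow two_ne_zero]
    positivity
  · rw [Set.indicator_of_mem (by simpa using h)]
    refine (vC_sq_bound k).trans ?_
    have hs : (0 : ℝ) < 1 + ‖k‖ ^ 2 := by positivity
    have h0 : (16 : ℝ) ^ n ≤ 1 + ‖k‖ ^ 2 := by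
      simp only [Sset, Set.mem_ofPred_eq, not_le] at h
      exact h.le
    have h1 : (1 + ‖k‖ ^ 2)⁻¹ ≤ (1 / 16) ^ n := by
      rw [one_div, inv_pow]
      gcongr
    have h2 : (1 + ‖k‖ ^ 2) ^ (-3 : ℝ) =
        (1 + ‖k‖ ^ 2)⁻¹ * (1 + ‖k‖ ^ 2) ^ (-2 : ℝ) := by
      rw [← Real.rpow_neg_one, ← Real.rpow_add hs]; norm_num
    rw [h2]
    have h3 : 0 ≤ (1 + ‖k‖ ^ 2) ^ (-2 : ℝ) := by positivity
    nlinarith [mul_le_mul_of_nonneg_right h1 h3]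

theorem fourierInv_vC_L4 :
    ∫⁻ x, ‖(𝓕⁻ (vC_memLp.toLp vC) : Lp ℂ 2 (volume : Measure E3)) x‖ₑ ^ 4 < ⊤ := by
  have hma : ∀ n, MemLp ((Sset n).indicator vC) 2 volume := fun n => vC_memLp.indicator (Sset_meas n)
  have hmb : ∀ n, MemLp ((Sset n)ᶜ.indicator vC) 2 volume :=
    fun n => vC_memLp.indicator (Sset_meas n).compl
  have i1 := (int_rpow (-7 / 4) (by norm_num)).const_mul 6
  have i2 := (int_rpow (-2) (by norm_num)).const_mul 36
  have hia : ∀ n, Integrable ((Sset n).indicator vC) := fun n =>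
    (i1.const_mul (2 ^ n)).mono' (hma n).1 (Filter.Eventually.of_forall (low_bound n))
  refine L4_of_decomp _ ((∫ k : E3, 6 * (1 + ‖k‖ ^ 2) ^ (-7 / 4 : ℝ)) + 1)
    (∫ k : E3, 36 * (1 + ‖k‖ ^ 2) ^ (-2 : ℝ)) ?_ ?_
    (fun n => (hma n).toLp _) (fun n => (hmb n).toLp _) ?_ ?_ ?_ ?_
  · have : 0 ≤ ∫ k : E3, 6 * (1 + ‖k‖ ^ 2) ^ (-7 / 4 : ℝ) := integral_nonneg fun k => by positivity
    linarith
  · exact integral_nonneg fun k => by positivity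
  · intro n
    rw [← MemLp.toLp_add]
    congr 1
    exact (Set.indicator_self_add_compl _ _).symm
  · intro n
    exact (hia n).congr (hma n).coeFn_toLp.symm
  · intro n
    have : ∫ x, ‖(hma n).toLp _ x‖ = ∫ x, ‖(Sset n).indicator vC x‖ := by
      apply integral_congr_ae
      filter_upwards [(hma n).coeFn_toLp] with x hx
      rw [hx]
    rw [this]
    have h1 : ∫ x, ‖(Sset n).indicator vC x‖ ≤ ∫ k : E3, 2 ^ n * (6 * (1 + ‖k‖ ^ 2) ^ (-7 / 4 : ℝ)) :=
      integral_mono (hia n).norm (i1.const_mul (2 ^ n)) (low_bound n)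
    rw [integral_const_mul] at h1
    have : (0 : ℝ) < 2 ^ n := by positivity
    linarith
  · intro n
    have : ∫⁻ x, ‖(hmb n).toLp _ x‖ₑ ^ 2 = ∫⁻ x, ‖(Sset n)ᶜ.indicator vC x‖ₑ ^ 2 := by
      apply lintegral_congr_ae
      filter_upwards [(hmb n).coeFn_toLp] with x hx
      rw [hx]
    rw [this, mul_comm, ← integral_const_mul,
      ofReal_integral_eq_lintegral_ofReal (i2.const_mul _)
        (Filter.Eventually.of_forall fun k => by positivity)]
    apply lintegral_mono
    intro k
    dsimp only
    rw [← ofReal_norm, ← ENNReal.ofReal_pow (norm_nonneg _)]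
    exact ENNReal.ofReal_le_ofReal (high_bound n k)

/-- If `V ∈ L²(ℝ³;ℝ)` satisfies `∫ V(x)(∫ e^{−ik·x}φ(k) dk) dx = ∫ v(k)φ(k) dk` for every
Schwartz function `φ` (i.e. the unnormalized Fourier transform of `V` equals `v`), then
`V ∈ L⁴(ℝ³)`: `∫ |V(x)|⁴ dx < ∞`. -/
theorem V_mem_L4 (V : EuclideanSpace ℝ (Fin 3) → ℝ) (hV2 : MemLp V 2 volume)
    (hVFourier : ∀ φ : SchwartzMap (EuclideanSpace ℝ (Fin 3)) ℂ,
      (∫ x, ((V x : ℝ) : ℂ) *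
          ∫ k, Complex.exp (-(Complex.I * ((inner ℝ k x : ℝ) : ℂ))) * φ k) =
        ∫ k, ((vker k : ℝ) : ℂ) * φ k) :
    ∫⁻ x, ENNReal.ofReal (|V x| ^ 4) < ⊤ := by
  set c : ℝ := (2 * Real.pi) ^ 3 with hc
  have hpi : (0 : ℝ) < 2 * Real.pi := by positivity
  have hc0 : 0 < c := by positivity
  set U : E3 → ℂ := fun y => ((c * V ((2 * Real.pi) • y) : ℝ) : ℂ) with hU
  have hUm : MemLp U 2 volume :=
    ((memLp_comp_smul V hV2 (2 * Real.pi) hpi.ne').const_mul c).ofReal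
  have hUeq : hUm.toLp U = 𝓕⁻ (vC_memLp.toLp vC) := by
    apply eq_fourierInv
    intro φ
    have e1 : ∫ x, (𝓕 φ) x • hUm.toLp U x = ∫ x, (𝓕 φ) x • U x := by
      apply integral_congr_ae
      filter_upwards [hUm.coeFn_toLp] with x hx
      rw [hx]
    have e2 : ∫ x, φ x • vC_memLp.toLp vC x = ∫ k, ((vker k : ℝ) : ℂ) * φ k := by
      apply integral_congr_ae
      filter_upwards [vC_memLp.coeFn_toLp] with x hx
      rw [hx, smul_eq_mul, mul_comm, vC]
    rw [e1, e2, ← hVFourier φ]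
    have e3 := Measure.integral_comp_smul (volume : Measure E3) (fun x => ((V x : ℝ) : ℂ) *
          ∫ k, Complex.exp (-(Complex.I * ((inner ℝ k x : ℝ) : ℂ))) * φ k) (2 * Real.pi)
    have e4 : ∀ y : E3, (𝓕 φ) y • U y = (c : ℂ) * (((V ((2 * Real.pi) • y) : ℝ) : ℂ) *
          ∫ k, Complex.exp (-(Complex.I * ((inner ℝ k ((2 * Real.pi) • y) : ℝ) : ℂ))) * φ k) := by
      intro y
      rw [SchwartzMap.fourier_coe, Real.fourier_eq', hU]
      simp only [smul_eq_mul, Complex.ofReal_mul]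
      rw [mul_comm, mul_assoc]
      congr 3
      funext k
      congr 2
      rw [inner_smul_right]
      push_cast
      ring
    simp_rw [e4]
    rw [integral_const_mul, e3]
    have hf : Module.finrank ℝ E3 = 3 := by simp
    rw [hf, ← hc, abs_of_pos (inv_pos.2 hc0), Complex.real_smul, ← mul_assoc, ← Complex.ofReal_mul,
      mul_inv_cancel₀ hc0.ne', Complex.ofReal_one, one_mul]
  have hU4 : ∫⁻ x, ‖U x‖ₑ ^ 4 < ⊤ := by
    have h := fourierInv_vC_L4
    rw [← hUeq] at h
    refine lt_of_eq_of_lt ?_ h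
    apply lintegral_congr_ae
    filter_upwards [hUm.coeFn_toLp] with x hx
    rw [hx]
  have econv : ∀ f : E3 → ℂ, eLpNorm f 4 volume ^ 4 = ∫⁻ x, ‖f x‖ₑ ^ 4 := by
    intro f
    have h := eLpNorm_nnreal_pow_eq_lintegral (μ := volume) (f := f) (p := 4) (by norm_num)
    simp only [NNReal.coe_ofNat, ENNReal.coe_ofNat] at h
    exact_mod_cast h
  have hU4' : MemLp U 4 volume := by
    refine ⟨hUm.1, ?_⟩
    rw [← econv] at hU4
    by_contra hcon
    rw [not_lt, top_le_iff] at hcon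
    rw [hcon] at hU4
    simp at hU4
  have hV4 := (memLp_comp_smul U hU4' (2 * Real.pi)⁻¹ (inv_pos.2 hpi).ne').const_mul ((c⁻¹ : ℝ) : ℂ)
  have hVV : (fun x => ((c⁻¹ : ℝ) : ℂ) * U ((2 * Real.pi)⁻¹ • x)) = fun x => ((V x : ℝ) : ℂ) := by
    funext x
    rw [hU]
    simp only
    rw [smul_inv_smul₀ hpi.ne', ← Complex.ofReal_mul, inv_mul_cancel_left₀ hc0.ne']
  rw [hVV] at hV4
  have hfin : ∫⁻ x, ‖((V x : ℝ) : ℂ)‖ₑ ^ 4 < ⊤ := by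
    rw [← econv]
    exact ENNReal.pow_lt_top hV4.2
  refine lt_of_eq_of_lt ?_ hfin
  apply lintegral_congr
  intro x
  rw [← ofReal_norm, ← ENNReal.ofReal_pow (norm_nonneg _), Complex.norm_real, Real.norm_eq_abs]

end
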